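/- Let S be a finite set, ν a probability measure on S with ν({η}) > 0 for all η ∈ S, and c : S × S → [0,∞) with c(η,η) = 0 for all η. Define the Markov generator (Lf)(η) := Σ_{η'∈S} c(η,η')(f(η') − f(η)). Let Ψ : S → (0,∞), let f : S → (0,∞) be a probability density with respect to ν, and set h := f/Ψ. Then Σ_η ν({η}) f(η) (L log h)(η) ≤ − Σ_{η,η'} ν({η}) Ψ(η) c(η,η') (√(h(η')) − √(h(η)))² + Σ_η ν({η}) Ψ(η) (Lh)(η). -/

import Mathlib

open Finset

lemma entropy_elem (a b : ℝ) (ha : 0 < a) (hb : 0 < b) :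
    b * (Real.log a - Real.log b) ≤ -(Real.sqrt a - Real.sqrt b) ^ 2 + (a - b) := by
  obtain ⟨x, hx, rfl⟩ : ∃ x : ℝ, 0 < x ∧ x ^ 2 = a :=
    ⟨Real.sqrt a, Real.sqrt_pos.2 ha, Real.sq_sqrt ha.le⟩
  obtain ⟨y, hy, rfl⟩ : ∃ y : ℝ, 0 < y ∧ y ^ 2 = b :=
    ⟨Real.sqrt b, Real.sqrt_pos.2 hb, Real.sq_sqrt hb.le⟩
  rw [Real.sqrt_sq hx.le, Real.sqrt_sq hy.le, Real.log_pow, Real.log_pow]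
  have h := Real.log_le_sub_one_of_pos (div_pos hx hy)
  rw [Real.log_div hx.ne' hy.ne'] at h
  have h2 := mul_le_mul_of_nonneg_left h (sq_nonneg y)
  have h3 : y ^ 2 * (x / y - 1) = x * y - y ^ 2 := by
    field_simp
  rw [h3] at h2
  push_cast
  nlinarith

/-- Entropy-production bound for a Markov generator on a finite state space `S`:
with `ν` a (positive) probability measure, jump rates `c ≥ 0` with `c η η = 0`,
`(Lf)(η) = Σ_{η'} c(η,η')(f(η') - f(η))`, `Ψ > 0`, `f > 0` a probability density with
respect to `ν`, and `h = f/Ψ`, one has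
`Σ ν f (L log h) ≤ - Σ ν Ψ c (√h' - √h)² + Σ ν Ψ (Lh)`. -/
theorem entropy_production_bound {S : Type*} [Fintype S]
    (ν : S → ℝ) (hν : ∀ η, 0 < ν η) (hν1 : ∑ η, ν η = 1)
    (c : S → S → ℝ) (hc : ∀ η η', 0 ≤ c η η') (hcd : ∀ η, c η η = 0)
    (Ψ : S → ℝ) (hΨ : ∀ η, 0 < Ψ η)
    (f : S → ℝ) (hf : ∀ η, 0 < f η) (hf1 : ∑ η, ν η * f η = 1) :
    ∑ η, ν η * f η *
        (∑ η', c η η' * (Real.log (f η' / Ψ η') - Real.log (f η / Ψ η)))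
      ≤ -∑ η, ∑ η', ν η * Ψ η * c η η' *
            (Real.sqrt (f η' / Ψ η') - Real.sqrt (f η / Ψ η)) ^ 2
        + ∑ η, ν η * Ψ η * (∑ η', c η η' * (f η' / Ψ η' - f η / Ψ η)) := by
  rw [← Finset.sum_neg_distrib, ← Finset.sum_add_distrib]
  refine Finset.sum_le_sum fun η _ => ?_
  rw [Finset.mul_sum, Finset.mul_sum, ← Finset.sum_neg_distrib, ← Finset.sum_add_distrib]
  refine Finset.sum_le_sum fun η' _ => ?_
  have h := entropy_elem (f η' / Ψ η') (f η / Ψ η) (div_pos (hf _) (hΨ _)) (div_pos (hf _) (hΨ _))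
  have hw : 0 ≤ ν η * Ψ η * c η η' := mul_nonneg (mul_pos (hν _) (hΨ _)).le (hc _ _)
  have h2 := mul_le_mul_of_nonneg_left h hw
  have h3 : f η = Ψ η * (f η / Ψ η) := by
    have := (hΨ η).ne'
    field_simp
  calc _ = ν η * (Ψ η * (f η / Ψ η)) *
        (c η η' * (Real.log (f η' / Ψ η') - Real.log (f η / Ψ η))) := by rw [← h3]
    _ = ν η * Ψ η * c η η' * (f η / Ψ η *
        (Real.log (f η' / Ψ η') - Real.log (f η / Ψ η))) := by ring
    _ ≤ _ := h2
    _ = _ := by ring
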